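/- arXiv:math/0606401 — 4 statements merged into one kernel-verified Lean document; each statement's English description precedes it below -/
import Mathlib

section
/- Fix integers n, k ≥ 1, and let A be a connection form on ℝⁿ with curvature F. For every smooth map Φ : ℝⁿ → ℝᵏ, every index b and every point x, (M^D(DΦ))_b(x) = Σ_a (D_a F_{ba})(x) Φ(x), where DΦ is the 1-form with components (DΦ)_a = D_a Φ and D_a F_{ba} = ∂_a F_{ba} + A_a F_{ba} − F_{ba} A_a. (Flat-chart form of the first part of Lemma 3.1: M^D d^D = e(δ^D F).) -/
noncomputable section

/-- Points of `ℝⁿ`. -/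
abbrev Vec (n : ℕ) := Fin n → ℝ

/-- Real `k × k` matrices, as plain functions. -/
abbrev Mat (k : ℕ) := Fin k → Fin k → ℝ

/-- Matrix product. -/
def matMul {k : ℕ} (M N : Mat k) : Mat k := fun i j => ∑ l, M i l * N l j

/-- Matrix acting on a vector. -/
def matVec {k : ℕ} (M : Mat k) (v : Fin k → ℝ) : Fin k → ℝ := fun i => ∑ j, M i j * v j

/-- The identity matrix. -/
def idMat (k : ℕ) : Mat k := fun i j => if i = j then 1 else 0

/-- Partial derivative `∂_a f` in the `a`-th coordinate direction. -/
def pd {n : ℕ} {E : Type*} [NormedAddCommGroup E] [NormedSpace ℝ E]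
    (a : Fin n) (f : Vec n → E) (x : Vec n) : E :=
  fderiv ℝ f x (Pi.single a 1)

/-- The coupled covariant derivative `D_a φ = ∂_a φ + A_a φ` on `ℝᵏ`-valued maps. -/
def Dv {n k : ℕ} (A : Fin n → Vec n → Mat k) (a : Fin n)
    (φ : Vec n → Fin k → ℝ) (x : Vec n) : Fin k → ℝ :=
  pd a φ x + matVec (A a x) (φ x)

/-- The covariant derivative `D_a S = ∂_a S + A_a S − S A_a` on matrix-valued maps. -/
def Dm {n k : ℕ} (A : Fin n → Vec n → Mat k) (a : Fin n)
    (S : Vec n → Mat k) (x : Vec n) : Mat k :=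
  pd a S x + matMul (A a x) (S x) - matMul (S x) (A a x)

/-- The curvature `F_{ab} = ∂_a A_b − ∂_b A_a + A_a A_b − A_b A_a` of a connection form. -/
def curv {n k : ℕ} (A : Fin n → Vec n → Mat k) (a b : Fin n) (x : Vec n) : Mat k :=
  pd a (A b) x - pd b (A a) x + matMul (A a x) (A b x) - matMul (A b x) (A a x)

/-- The middle operator `(M^D ψ)_b = −Σ_a D_a(D_a ψ_b − D_b ψ_a) − Σ_a F_{ba} ψ_a`
of the Yang–Mills detour sequence, on `ℝᵏ`-valued 1-forms. -/
def MD {n k : ℕ} (A : Fin n → Vec n → Mat k) (ψ : Fin n → Vec n → Fin k → ℝ)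
    (b : Fin n) (x : Vec n) : Fin k → ℝ :=
  -(∑ a, Dv A a (fun y => Dv A a (ψ b) y - Dv A b (ψ a) y) x)
    - ∑ a, matVec (curv A b a x) (ψ a x)

theorem matVec_add' {k : ℕ} (M : Mat k) (u v : Fin k → ℝ) :
    matVec M (u + v) = matVec M u + matVec M v := by
  funext i; simp [matVec, mul_add, Finset.sum_add_distrib]

theorem matVec_neg' {k : ℕ} (M : Mat k) (u : Fin k → ℝ) :
    matVec M (-u) = -matVec M u := by
  funext i; simp [matVec]

theorem add_matVec' {k : ℕ} (M N : Mat k) (u : Fin k → ℝ) :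
    matVec (M + N) u = matVec M u + matVec N u := by
  funext i; simp [matVec, add_mul, Finset.sum_add_distrib]

theorem sub_matVec' {k : ℕ} (M N : Mat k) (u : Fin k → ℝ) :
    matVec (M - N) u = matVec M u - matVec N u := by
  funext i; simp [matVec, sub_mul, Finset.sum_sub_distrib]

theorem matMul_matVec' {k : ℕ} (M N : Mat k) (u : Fin k → ℝ) :
    matVec (matMul M N) u = matVec M (matVec N u) := by
  funext i
  simp only [matVec, matMul, Finset.sum_mul, Finset.mul_sum]
  rw [Finset.sum_comm]
  simp only [mul_assoc]

theorem sum_matVec' {k n : ℕ} (M : Fin n → Mat k) (u : Fin k → ℝ) :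
    matVec (∑ a, M a) u = ∑ a, matVec (M a) u := by
  funext i
  simp only [matVec, Finset.sum_apply, Finset.sum_mul]
  rw [Finset.sum_comm]

theorem pd_apply' {n : ℕ} {ι : Type*} [Fintype ι] {E : Type*} [NormedAddCommGroup E]
    [NormedSpace ℝ E] (a : Fin n) (f : Vec n → ι → E) (x : Vec n)
    (hf : DifferentiableAt ℝ f x) (i : ι) : pd a f x i = pd a (fun y => f y i) x := by
  unfold pd
  rw [fderiv_apply hf i]
  rfl

theorem pd_matVec' {n k : ℕ} (a : Fin n) (S : Vec n → Mat k) (φ : Vec n → Fin k → ℝ) (x : Vec n)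
    (hS : DifferentiableAt ℝ S x) (hφ : DifferentiableAt ℝ φ x) :
    pd a (fun y => matVec (S y) (φ y)) x = matVec (pd a S x) (φ x) + matVec (S x) (pd a φ x) := by
  have hSi : ∀ i, DifferentiableAt ℝ (fun y => S y i) x := fun i => by fun_prop
  have hSij : ∀ i j, DifferentiableAt ℝ (fun y => S y i j) x := fun i j => by fun_prop
  have hφj : ∀ j, DifferentiableAt ℝ (fun y => φ y j) x := fun j => by fun_prop
  have hm : DifferentiableAt ℝ (fun y => matVec (S y) (φ y)) x := by
    unfold matVec; fun_prop
  funext i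
  rw [pd_apply' a _ x hm i]
  simp only [matVec, Pi.add_apply]
  rw [← Finset.sum_add_distrib]
  unfold pd
  rw [fderiv_fun_sum (fun j _ => (hSij i j).fun_mul (hφj j))]
  rw [ContinuousLinearMap.sum_apply]
  refine Finset.sum_congr rfl fun j _ => ?_
  rw [fderiv_fun_mul (hSij i j) (hφj j)]
  have e1 := pd_apply' a S x hS i
  have e2 := pd_apply' a _ x (hSi i) j
  have e3 := pd_apply' a φ x hφ j
  unfold pd at e1 e2 e3
  rw [e1, e2, e3]
  simp
  ring

theorem pd_add' {n : ℕ} {E : Type*} [NormedAddCommGroup E] [NormedSpace ℝ E]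
    (a : Fin n) (f g : Vec n → E) (x : Vec n)
    (hf : DifferentiableAt ℝ f x) (hg : DifferentiableAt ℝ g x) :
    pd a (fun y => f y + g y) x = pd a f x + pd a g x := by
  unfold pd; rw [fderiv_fun_add hf hg]; rfl

theorem pd_smooth' {n : ℕ} {E : Type*} [NormedAddCommGroup E] [NormedSpace ℝ E]
    (a : Fin n) (f : Vec n → E) (hf : ContDiff ℝ (⊤ : ℕ∞) f) :
    ContDiff ℝ (⊤ : ℕ∞) (pd a f) := by
  unfold pd
  exact (hf.fderiv_right (m := (⊤ : ℕ∞)) (by simp)).clm_apply contDiff_const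

theorem pd_comm' {n : ℕ} {E : Type*} [NormedAddCommGroup E] [NormedSpace ℝ E]
    (a b : Fin n) (f : Vec n → E) (hf : ContDiff ℝ (⊤ : ℕ∞) f) (x : Vec n) :
    pd a (pd b f) x = pd b (pd a f) x := by
  have hs : IsSymmSndFDerivAt ℝ f x :=
    hf.contDiffAt.isSymmSndFDerivAt (by simp; exact WithTop.coe_le_coe.2 (le_top : (2 : ℕ∞) ≤ ⊤))
  have hd : DifferentiableAt ℝ (fderiv ℝ f) x :=
    ((hf.fderiv_right (m := (⊤ : ℕ∞)) (by simp)).differentiable (by simp)) x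
  have key : ∀ u v : Vec n, fderiv ℝ (fun y => fderiv ℝ f y u) x v
      = fderiv ℝ (fderiv ℝ f) x v u := by
    intro u v
    rw [fderiv_clm_apply hd (differentiableAt_const u)]
    simp
  unfold pd
  rw [key, key]
  exact hs.eq _ _

theorem matVec_smooth' {n k : ℕ} (S : Vec n → Mat k) (φ : Vec n → Fin k → ℝ)
    (hS : ContDiff ℝ (⊤ : ℕ∞) S) (hφ : ContDiff ℝ (⊤ : ℕ∞) φ) :
    ContDiff ℝ (⊤ : ℕ∞) (fun y => matVec (S y) (φ y)) := by
  unfold matVec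
  fun_prop

theorem matMul_smooth' {n k : ℕ} (S T : Vec n → Mat k)
    (hS : ContDiff ℝ (⊤ : ℕ∞) S) (hT : ContDiff ℝ (⊤ : ℕ∞) T) :
    ContDiff ℝ (⊤ : ℕ∞) (fun y => matMul (S y) (T y)) := by
  unfold matMul
  fun_prop

theorem curv_smooth' {n k : ℕ} (A : Fin n → Vec n → Mat k)
    (hA : ∀ a, ContDiff ℝ (⊤ : ℕ∞) (A a)) (a b : Fin n) :
    ContDiff ℝ (⊤ : ℕ∞) (curv A a b) := by
  unfold curv
  exact (((pd_smooth' a _ (hA b)).sub (pd_smooth' b _ (hA a))).add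
    (matMul_smooth' _ _ (hA a) (hA b))).sub (matMul_smooth' _ _ (hA b) (hA a))

theorem curv_comm' {n k : ℕ} (A : Fin n → Vec n → Mat k)
    (hA : ∀ a, ContDiff ℝ (⊤ : ℕ∞) (A a))
    (Φ : Vec n → Fin k → ℝ) (hΦ : ContDiff ℝ (⊤ : ℕ∞) Φ) (a b : Fin n) (y : Vec n) :
    Dv A a (Dv A b Φ) y - Dv A b (Dv A a Φ) y = -matVec (curv A b a y) (Φ y) := by
  have ne : ((⊤ : ℕ∞) : WithTop ℕ∞) ≠ 0 := by simp
  have h : ∀ a b, Dv A a (Dv A b Φ) y = pd a (pd b Φ) y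
      + (matVec (pd a (A b) y) (Φ y) + matVec (A b y) (pd a Φ y))
      + (matVec (A a y) (pd b Φ y) + matVec (A a y) (matVec (A b y) (Φ y))) := by
    intro a b
    have e : pd a (Dv A b Φ) y = pd a (fun z => pd b Φ z + matVec (A b z) (Φ z)) y := rfl
    rw [Dv, e, pd_add' a _ _ y ((pd_smooth' b Φ hΦ).differentiable ne y)
      ((matVec_smooth' _ _ (hA b) hΦ).differentiable ne y),
      pd_matVec' a _ _ y ((hA b).differentiable ne y) (hΦ.differentiable ne y),
      Dv, matVec_add']
  rw [h a b, h b a, pd_comm' a b Φ hΦ y, curv]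
  simp only [sub_matVec', add_matVec', matMul_matVec']
  abel

/-- Flat-chart form of the first part of Lemma 3.1: `M^D d^D = e(δ^D F)`, i.e.
`(M^D(DΦ))_b = Σ_a (D_a F_{ba}) Φ`. -/
theorem MD_comp_dD (n k : ℕ) (hn : 1 ≤ n) (hk : 1 ≤ k)
    (A : Fin n → Vec n → Mat k) (hA : ∀ a, ContDiff ℝ (⊤ : ℕ∞) (A a))
    (Φ : Vec n → Fin k → ℝ) (hΦ : ContDiff ℝ (⊤ : ℕ∞) Φ)
    (b : Fin n) (x : Vec n) :
    MD A (fun a => Dv A a Φ) b x = matVec (∑ a, Dm A a (curv A b a) x) (Φ x) := by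
  have ne : ((⊤ : ℕ∞) : WithTop ℕ∞) ≠ 0 := by simp
  rw [MD, sum_matVec', ← Finset.sum_neg_distrib, ← Finset.sum_sub_distrib]
  refine Finset.sum_congr rfl fun a _ => ?_
  have e : (fun y => Dv A a (Dv A b Φ) y - Dv A b (Dv A a Φ) y)
      = fun y => -matVec (curv A b a y) (Φ y) := by
    funext y; exact curv_comm' A hA Φ hΦ a b y
  have e2 : pd a (fun y => -matVec (curv A b a y) (Φ y)) x
      = -pd a (fun y => matVec (curv A b a y) (Φ y)) x := by
    unfold pd
    rw [fderiv_fun_neg]; rfl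
  rw [e, Dv, e2, pd_matVec' a _ _ x ((curv_smooth' A hA b a).differentiable ne x)
    (hΦ.differentiable ne x), matVec_neg', Dv, Dm]
  simp only [sub_matVec', add_matVec', matMul_matVec', matVec_add']
  abel
end
end

section
/- Fix integers n, k ≥ 1, and let A be a connection form on ℝⁿ such that every matrix A_a(x) is skew-symmetric (an orthogonal connection). Then the operator M^D is formally self-adjoint: for all smooth, compactly supported ℝᵏ-valued 1-forms φ and ψ on ℝⁿ, ∫_{ℝⁿ} Σ_b ⟨(M^D φ)_b(x), ψ_b(x)⟩ dx = ∫_{ℝⁿ} Σ_b ⟨φ_b(x), (M^D ψ)_b(x)⟩ dx, where ⟨·,·⟩ is the Euclidean inner product on ℝᵏ. (Flat-chart form of Theorem 3.2(i).) -/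
noncomputable section

open MeasureTheory

theorem aux_contDiff_pd {n : ℕ} {E : Type*} [NormedAddCommGroup E] [NormedSpace ℝ E]
    (a : Fin n) {f : Vec n → E} (hf : ContDiff ℝ (⊤ : ℕ∞) f) :
    ContDiff ℝ (⊤ : ℕ∞) (pd a f) := by
  have h : ContDiff ℝ (⊤ : ℕ∞) (fderiv ℝ f) := hf.fderiv_right (by simp)
  exact h.clm_apply contDiff_const

theorem aux_contDiff_matVec {n k : ℕ} {M : Vec n → Mat k} {v : Vec n → Fin k → ℝ}
    (hM : ContDiff ℝ (⊤ : ℕ∞) M) (hv : ContDiff ℝ (⊤ : ℕ∞) v) :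
    ContDiff ℝ (⊤ : ℕ∞) (fun x => matVec (M x) (v x)) := by
  rw [contDiff_pi]
  intro i
  unfold matVec
  refine ContDiff.sum fun j _ => ?_
  exact (contDiff_pi.1 (contDiff_pi.1 hM i) j).mul (contDiff_pi.1 hv j)

theorem aux_contDiff_matMul {n k : ℕ} {M N : Vec n → Mat k}
    (hM : ContDiff ℝ (⊤ : ℕ∞) M) (hN : ContDiff ℝ (⊤ : ℕ∞) N) :
    ContDiff ℝ (⊤ : ℕ∞) (fun x => matMul (M x) (N x)) := by
  rw [contDiff_pi]
  intro i
  rw [contDiff_pi]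
  intro j
  unfold matMul
  refine ContDiff.sum fun l _ => ?_
  exact (contDiff_pi.1 (contDiff_pi.1 hM i) l).mul (contDiff_pi.1 (contDiff_pi.1 hN l) j)

theorem aux_contDiff_Dv {n k : ℕ} {A : Fin n → Vec n → Mat k}
    (hA : ∀ a, ContDiff ℝ (⊤ : ℕ∞) (A a)) (a : Fin n) {u : Vec n → Fin k → ℝ}
    (hu : ContDiff ℝ (⊤ : ℕ∞) u) : ContDiff ℝ (⊤ : ℕ∞) (Dv A a u) :=
  (aux_contDiff_pd a hu).add (aux_contDiff_matVec (hA a) hu)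

theorem aux_contDiff_curv {n k : ℕ} {A : Fin n → Vec n → Mat k}
    (hA : ∀ a, ContDiff ℝ (⊤ : ℕ∞) (A a)) (a b : Fin n) :
    ContDiff ℝ (⊤ : ℕ∞) (curv A a b) :=
  (((aux_contDiff_pd a (hA b)).sub (aux_contDiff_pd b (hA a))).add
    (aux_contDiff_matMul (hA a) (hA b))).sub (aux_contDiff_matMul (hA b) (hA a))

theorem aux_contDiff_MD {n k : ℕ} {A : Fin n → Vec n → Mat k}
    (hA : ∀ a, ContDiff ℝ (⊤ : ℕ∞) (A a)) {φ : Fin n → Vec n → Fin k → ℝ}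
    (hφ : ∀ a, ContDiff ℝ (⊤ : ℕ∞) (φ a)) (b : Fin n) :
    ContDiff ℝ (⊤ : ℕ∞) (MD A φ b) := by
  unfold MD
  refine ContDiff.sub (ContDiff.neg (ContDiff.sum fun a _ => ?_)) (ContDiff.sum fun a _ => ?_)
  · exact aux_contDiff_Dv hA a ((aux_contDiff_Dv hA a (hφ b)).sub (aux_contDiff_Dv hA b (hφ a)))
  · exact aux_contDiff_matVec (aux_contDiff_curv hA b a) (hφ a)

theorem aux_pd_apply {n k : ℕ} (a : Fin n) {u : Vec n → Fin k → ℝ}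
    (hu : ContDiff ℝ (⊤ : ℕ∞) u) (x : Vec n) (i : Fin k) :
    pd a u x i = pd a (fun y => u y i) x := by
  unfold pd
  have h : DifferentiableAt ℝ u x := (hu.differentiable (by simp)) x
  rw [fderiv_apply h]
  rfl

theorem aux_pd_apply2 {n k : ℕ} (a : Fin n) {M : Vec n → Mat k}
    (hM : ContDiff ℝ (⊤ : ℕ∞) M) (x : Vec n) (i j : Fin k) :
    pd a M x i j = pd a (fun y => M y i j) x := by
  have h : DifferentiableAt ℝ M x := (hM.differentiable (by simp)) x
  have h1 : pd a M x i = pd a (fun y => M y i) x := by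
    unfold pd
    rw [fderiv_apply h]
    rfl
  rw [h1, aux_pd_apply a (contDiff_pi.1 hM i)]

theorem aux_curv_skew {n k : ℕ} {A : Fin n → Vec n → Mat k}
    (hA : ∀ a, ContDiff ℝ (⊤ : ℕ∞) (A a))
    (hskew : ∀ (a : Fin n) (x : Vec n) (i j : Fin k), A a x i j = - A a x j i)
    (a b : Fin n) (x : Vec n) (i j : Fin k) : curv A a b x i j = curv A b a x j i := by
  have hp : ∀ c d : Fin n, pd c (A d) x i j = - pd c (A d) x j i := by
    intro c d
    rw [aux_pd_apply2 c (hA d), aux_pd_apply2 c (hA d)]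
    have : (fun y => A d y i j) = fun y => -(A d y j i) := funext fun y => hskew d y i j
    rw [this]
    unfold pd
    rw [fderiv_fun_neg]
    rfl
  have hm : ∀ c d : Fin n, matMul (A c x) (A d x) i j = matMul (A d x) (A c x) j i := by
    intro c d
    unfold matMul
    refine Finset.sum_congr rfl fun l _ => ?_
    rw [hskew c x i l, hskew d x l j]
    ring
  simp only [curv, Pi.add_apply, Pi.sub_apply]
  rw [hp a b, hp b a, hm a b, hm b a]
  ring

theorem aux_pd_ip {n k : ℕ} {A : Fin n → Vec n → Mat k}
    (hskew : ∀ (a : Fin n) (x : Vec n) (i j : Fin k), A a x i j = - A a x j i)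
    (a : Fin n) {u v : Vec n → Fin k → ℝ}
    (hu : ContDiff ℝ (⊤ : ℕ∞) u) (hv : ContDiff ℝ (⊤ : ℕ∞) v) (x : Vec n) :
    pd a (fun y => ∑ i, u y i * v y i) x
      = ∑ i, Dv A a u x i * v x i + ∑ i, u x i * Dv A a v x i := by
  have hui : ∀ i, DifferentiableAt ℝ (fun y => u y i) x := fun i =>
    ((contDiff_pi.1 hu i).differentiable (by simp)) x
  have hvi : ∀ i, DifferentiableAt ℝ (fun y => v y i) x := fun i =>
    ((contDiff_pi.1 hv i).differentiable (by simp)) x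
  have h1 : pd a (fun y => ∑ i, u y i * v y i) x
      = ∑ i, (u x i * pd a v x i + v x i * pd a u x i) := by
    simp only [aux_pd_apply a hu, aux_pd_apply a hv]
    unfold pd
    rw [fderiv_fun_sum (fun i _ => (hui i).fun_mul (hvi i))]
    rw [ContinuousLinearMap.sum_apply]
    refine Finset.sum_congr rfl fun i _ => ?_
    rw [fderiv_fun_mul (hui i) (hvi i)]
    simp
  have h2 : ∑ i, matVec (A a x) (u x) i * v x i = - ∑ i, u x i * matVec (A a x) (v x) i := by
    unfold matVec
    simp only [Finset.sum_mul, Finset.mul_sum]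
    rw [Finset.sum_comm, ← Finset.sum_neg_distrib]
    refine Finset.sum_congr rfl fun i _ => ?_
    rw [← Finset.sum_neg_distrib]
    refine Finset.sum_congr rfl fun j _ => ?_
    rw [hskew a x j i]
    ring
  rw [h1]
  simp only [Dv, Pi.add_apply, add_mul, mul_add, Finset.sum_add_distrib]
  rw [h2]
  simp only [mul_comm]
  ring

theorem aux_integrable_pd {n : ℕ} (a : Fin n) {f : Vec n → ℝ}
    (hf : ContDiff ℝ (⊤ : ℕ∞) f) (hc : HasCompactSupport f) : Integrable (pd a f) :=
  (aux_contDiff_pd a hf).continuous.integrable_of_hasCompactSupport (hc.fderiv_apply ℝ _)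

theorem aux_integral_pd {n : ℕ} (a : Fin n) {f : Vec n → ℝ}
    (hf : ContDiff ℝ (⊤ : ℕ∞) f) (hc : HasCompactSupport f) : ∫ x, pd a f x = 0 := by
  have h := integral_mul_fderiv_eq_neg_fderiv_mul_of_integrable (μ := (volume : Measure (Vec n)))
    (f := fun _ => (1 : ℝ)) (g := f) (v := Pi.single a 1) (by simp)
    (by simp only [one_mul]; exact aux_integrable_pd a hf hc)
    (by simpa using hf.continuous.integrable_of_hasCompactSupport hc)
    (fun _ _ => by fun_prop) (fun x _ => (hf.differentiable (by simp)) x)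
  simpa [pd] using h

theorem aux_contDiff_ip {n k : ℕ} {u v : Vec n → Fin k → ℝ}
    (hu : ContDiff ℝ (⊤ : ℕ∞) u) (hv : ContDiff ℝ (⊤ : ℕ∞) v) :
    ContDiff ℝ (⊤ : ℕ∞) (fun y => ∑ i, u y i * v y i) :=
  ContDiff.sum fun i _ => (contDiff_pi.1 hu i).mul (contDiff_pi.1 hv i)

theorem aux_supp_ip {n k : ℕ} {u v : Vec n → Fin k → ℝ} (hv : HasCompactSupport v) :
    HasCompactSupport (fun y => ∑ i, u y i * v y i) := by
  refine hv.mono ?_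
  intro x hx h
  apply hx
  simp [h]

/-- The symmetric pointwise pairing, modulo divergence. -/
theorem aux_pointwise {n k : ℕ} {A : Fin n → Vec n → Mat k}
    (hA : ∀ a, ContDiff ℝ (⊤ : ℕ∞) (A a))
    (hskew : ∀ (a : Fin n) (x : Vec n) (i j : Fin k), A a x i j = - A a x j i)
    {φ ψ : Fin n → Vec n → Fin k → ℝ}
    (hφ : ∀ a, ContDiff ℝ (⊤ : ℕ∞) (φ a)) (hψ : ∀ a, ContDiff ℝ (⊤ : ℕ∞) (ψ a)) (x : Vec n) :
    ∑ b, ∑ i, MD A φ b x i * ψ b x i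
      = (∑ b, ∑ a, ∑ i, (Dv A a (φ b) x i - Dv A b (φ a) x i) * Dv A a (ψ b) x i)
        - (∑ b, ∑ a, ∑ i, ∑ j, curv A b a x i j * φ a x j * ψ b x i)
        - ∑ b, ∑ a, pd a (fun y => ∑ i, (Dv A a (φ b) y - Dv A b (φ a) y) i * ψ b y i) x := by
  rw [← Finset.sum_sub_distrib, ← Finset.sum_sub_distrib]
  refine Finset.sum_congr rfl fun b _ => ?_
  rw [← Finset.sum_sub_distrib, ← Finset.sum_sub_distrib]
  have h : ∀ i, MD A φ b x i * ψ b x i =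
      ∑ a, (-(Dv A a (fun y => Dv A a (φ b) y - Dv A b (φ a) y) x i * ψ b x i)
        - ∑ j, curv A b a x i j * φ a x j * ψ b x i) := by
    intro i
    simp only [MD, Pi.sub_apply, Pi.neg_apply, Finset.sum_apply, matVec,
      Finset.sum_sub_distrib, Finset.sum_neg_distrib, sub_mul, neg_mul, Finset.sum_mul]
  simp only [h]
  rw [Finset.sum_comm]
  refine Finset.sum_congr rfl fun a _ => ?_
  rw [aux_pd_ip hskew a (u := fun y => Dv A a (φ b) y - Dv A b (φ a) y)
    ((aux_contDiff_Dv hA a (hφ b)).sub (aux_contDiff_Dv hA b (hφ a))) (hψ b) x]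
  simp only [Finset.sum_sub_distrib, Finset.sum_neg_distrib, Pi.sub_apply]
  ring

theorem MD_formally_selfAdjoint (n k : ℕ) (hn : 1 ≤ n) (hk : 1 ≤ k)
    (A : Fin n → Vec n → Mat k) (hA : ∀ a, ContDiff ℝ (⊤ : ℕ∞) (A a))
    (hskew : ∀ (a : Fin n) (x : Vec n) (i j : Fin k), A a x i j = - A a x j i)
    (φ ψ : Fin n → Vec n → Fin k → ℝ)
    (hφ : ∀ a, ContDiff ℝ (⊤ : ℕ∞) (φ a)) (hψ : ∀ a, ContDiff ℝ (⊤ : ℕ∞) (ψ a))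
    (hφc : ∀ a, HasCompactSupport (φ a)) (hψc : ∀ a, HasCompactSupport (ψ a)) :
    ∫ x : Vec n, ∑ b, ∑ i, MD A φ b x i * ψ b x i
      = ∫ x : Vec n, ∑ b, ∑ i, φ b x i * MD A ψ b x i := by
  have key : ∀ (φ ψ : Fin n → Vec n → Fin k → ℝ), (∀ a, ContDiff ℝ (⊤ : ℕ∞) (φ a)) →
      (∀ a, ContDiff ℝ (⊤ : ℕ∞) (ψ a)) → (∀ a, HasCompactSupport (ψ a)) →
      ∫ x : Vec n, ∑ b, ∑ i, MD A φ b x i * ψ b x i = ∫ x : Vec n,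
        ((∑ b, ∑ a, ∑ i, (Dv A a (φ b) x i - Dv A b (φ a) x i) * Dv A a (ψ b) x i)
        - (∑ b, ∑ a, ∑ i, ∑ j, curv A b a x i j * φ a x j * ψ b x i)) := by
    intro φ ψ hφ hψ hψc
    have hG : ∀ b a, ContDiff ℝ (⊤ : ℕ∞)
        (fun y => ∑ i, (Dv A a (φ b) y - Dv A b (φ a) y) i * ψ b y i) := fun b a =>
      aux_contDiff_ip (u := fun y => Dv A a (φ b) y - Dv A b (φ a) y)
        ((aux_contDiff_Dv hA a (hφ b)).sub (aux_contDiff_Dv hA b (hφ a))) (hψ b)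
    have hGc : ∀ b a, HasCompactSupport
        (fun y => ∑ i, (Dv A a (φ b) y - Dv A b (φ a) y) i * ψ b y i) := fun b a =>
      aux_supp_ip (u := fun y => Dv A a (φ b) y - Dv A b (φ a) y) (hψc b)
    have hI1 : Integrable (fun x : Vec n => ∑ b, ∑ i, MD A φ b x i * ψ b x i) :=
      integrable_finsetSum _ fun b _ =>
        (aux_contDiff_ip (aux_contDiff_MD hA hφ b) (hψ b)).continuous.integrable_of_hasCompactSupport
          (aux_supp_ip (hψc b))
    have hI2 : Integrable (fun x : Vec n => ∑ b, ∑ a,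
        pd a (fun y => ∑ i, (Dv A a (φ b) y - Dv A b (φ a) y) i * ψ b y i) x) :=
      integrable_finsetSum _ fun b _ => integrable_finsetSum _ fun a _ =>
        aux_integrable_pd a (hG b a) (hGc b a)
    have h0 : ∫ x : Vec n, ∑ b, ∑ a,
        pd a (fun y => ∑ i, (Dv A a (φ b) y - Dv A b (φ a) y) i * ψ b y i) x = 0 := by
      rw [integral_finsetSum _ fun b _ => integrable_finsetSum _ fun a _ =>
        aux_integrable_pd a (hG b a) (hGc b a)]
      refine Finset.sum_eq_zero fun b _ => ?_
      rw [integral_finsetSum _ fun a _ => aux_integrable_pd a (hG b a) (hGc b a)]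
      exact Finset.sum_eq_zero fun a _ => aux_integral_pd a (hG b a) (hGc b a)
    have h1 := integral_add hI1 hI2
    rw [h0, add_zero] at h1
    rw [← h1]
    congr 1
    funext x
    rw [aux_pointwise hA hskew hφ hψ x]
    ring
  have hR : ∫ x : Vec n, ∑ b, ∑ i, φ b x i * MD A ψ b x i
      = ∫ x : Vec n, ∑ b, ∑ i, MD A ψ b x i * φ b x i := by
    simp only [mul_comm]
  rw [hR, key φ ψ hφ hψ hψc, key ψ φ hψ hφ hφc]
  congr 1
  funext x
  congr 1
  · simp only [sub_mul, Finset.sum_sub_distrib]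
    congr 1
    · simp only [mul_comm]
    · rw [Finset.sum_comm]
      simp only [mul_comm]
  · rw [Finset.sum_comm]
    refine Finset.sum_congr rfl fun a _ => Finset.sum_congr rfl fun b _ => ?_
    rw [Finset.sum_comm]
    refine Finset.sum_congr rfl fun i _ => Finset.sum_congr rfl fun j _ => ?_
    rw [aux_curv_skew hA hskew b a x j i]
    ring
end
end

section
/- Let n ≥ 1 and let Cl be the Clifford algebra of the quadratic form Q(x) = −‖x‖²/2 on Euclidean space ℝⁿ; set β_a = ι(e_a) for the standard basis vectors e_a, so that β_a β_b + β_b β_a = −δ_{ab}·1 in Cl. Let R be a Riemann-type tensor on {1,…,n}. Then for each index a, Σ_{b,c,d} R_{abcd} · β_b β_c β_d = Σ_b Ric_{ab} · β_b in Cl, where Ric_{ab} = Σ_c R_{cacb}. (First identity of equation (4.13) in the proof of Proposition 4.7.) -/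
open CliffordAlgebra

/-- First identity of equation (4.13) in the proof of Proposition 4.7: in the
Clifford algebra of the quadratic form `Q(x) = −‖x‖²/2` on Euclidean `ℝⁿ`, with
`β_a = ι(e_a)`, a Riemann-type tensor `R` satisfies
`Σ_{b,c,d} R_{abcd} β_b β_c β_d = Σ_b Ric_{ab} β_b`. -/
theorem riemann_clifford_contraction_ricci (n : ℕ) (hn : 1 ≤ n)
    (Q : QuadraticForm ℝ (EuclideanSpace ℝ (Fin n)))
    (hQ : ∀ x : EuclideanSpace ℝ (Fin n), Q x = -(‖x‖ ^ 2 / 2))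
    (β : Fin n → CliffordAlgebra Q)
    (hβ : ∀ a, β a = CliffordAlgebra.ι Q (EuclideanSpace.single a (1 : ℝ)))
    (R : Fin n → Fin n → Fin n → Fin n → ℝ)
    (hR1 : ∀ a b c d, R a b c d = -R b a c d)
    (hR2 : ∀ a b c d, R a b c d = -R a b d c)
    (hR3 : ∀ a b c d, R a b c d = R c d a b)
    (hBianchi : ∀ a b c d, R a b c d + R a c d b + R a d b c = 0)
    (a : Fin n) :
    ∑ b, ∑ c, ∑ d, R a b c d • (β b * β c * β d)
      = ∑ b, (∑ c, R c a c b) • β b := by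
  have hanti : ∀ b c, β b * β c = -(β c * β b) - (if b = c then (1:ℝ) else 0) • 1 := by
    intro b c
    have h := CliffordAlgebra.ι_mul_ι_add_swap (Q := Q) (EuclideanSpace.single b (1 : ℝ))
      (EuclideanSpace.single c (1 : ℝ))
    rw [← hβ, ← hβ, Algebra.algebraMap_eq_smul_one] at h
    have hp : QuadraticMap.polar Q (EuclideanSpace.single b (1 : ℝ))
        (EuclideanSpace.single c (1 : ℝ)) = -(if b = c then (1:ℝ) else 0) := by
      simp only [QuadraticMap.polar, hQ]
      rw [norm_add_sq_real]
      have : inner ℝ (EuclideanSpace.single b (1 : ℝ)) (EuclideanSpace.single c (1 : ℝ))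
          = (if b = c then (1:ℝ) else 0) := by
        simp [EuclideanSpace.inner_single_left]
      rw [this]; ring
    rw [hp, neg_smul] at h
    rw [eq_sub_of_add_eq h]; abel
  have h1 : ∀ b c d, β d * β b * β c = β b * β c * β d
      - (if d = b then (1:ℝ) else 0) • β c + (if d = c then (1:ℝ) else 0) • β b := by
    intro b c d
    rw [hanti d b, sub_mul, neg_mul, mul_assoc (β b) (β d), hanti d c, mul_sub, mul_neg,
      smul_mul_assoc, one_mul, mul_smul_comm, mul_one, mul_assoc (β b) (β c)]
    abel
  have h2 : ∀ b c d, β c * β d * β b = β b * β c * β d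
      - (if d = b then (1:ℝ) else 0) • β c + (if c = b then (1:ℝ) else 0) • β d := by
    intro b c d
    rw [mul_assoc, hanti d b, mul_sub, mul_neg, ← mul_assoc, hanti c b, sub_mul, neg_mul,
      smul_mul_assoc, one_mul, mul_smul_comm, mul_one]
    abel
  set X := ∑ b, ∑ c, ∑ d, R a b c d • (β b * β c * β d) with hX
  set Y := ∑ b, (∑ c, R c a c b) • β b with hY
  have hdiag : ∀ b c, R a b c c = 0 := fun b c => by linarith [hR2 a b c c]
  have hYd : ∑ b, ∑ c, R a b c b • β c = Y := by
    rw [hY, Finset.sum_comm]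
    refine Finset.sum_congr rfl fun c _ => ?_
    rw [Finset.sum_smul]
    refine Finset.sum_congr rfl fun b _ => ?_
    rw [hR1, hR2, neg_neg]
  have hYd' : ∑ b, ∑ d, R a b b d • β d = -Y := by
    rw [← hYd, ← Finset.sum_neg_distrib]
    refine Finset.sum_congr rfl fun b _ => ?_
    rw [← Finset.sum_neg_distrib]
    refine Finset.sum_congr rfl fun c _ => ?_
    rw [hR2, neg_smul]
  have e1 : ∑ b, ∑ c, ∑ d, R a b c d • (β d * β b * β c) = X - Y := by
    rw [Finset.sum_congr rfl fun b _ => Finset.sum_congr rfl fun c _ =>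
      Finset.sum_congr rfl fun d _ => congrArg (R a b c d • ·) (h1 b c d)]
    simp only [smul_add, smul_sub, Finset.sum_add_distrib, Finset.sum_sub_distrib]
    rw [← hX]
    simp [hdiag, hYd]
  have e2 : ∑ b, ∑ c, ∑ d, R a b c d • (β c * β d * β b) = X - Y - Y := by
    have : ∑ b, ∑ c, ∑ d, R a b c d • (if c = b then (1:ℝ) else 0) • β d = -Y := by
      rw [← hYd']
      refine Finset.sum_congr rfl fun b _ => ?_
      rw [Finset.sum_comm]
      simp
    rw [Finset.sum_congr rfl fun b _ => Finset.sum_congr rfl fun c _ =>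
      Finset.sum_congr rfl fun d _ => congrArg (R a b c d • ·) (h2 b c d)]
    simp only [smul_add, smul_sub, Finset.sum_add_distrib, Finset.sum_sub_distrib]
    rw [← hX, this]
    simp [hYd, sub_eq_add_neg]
  have r1 : ∑ b, ∑ c, ∑ d, R a c d b • (β b * β c * β d) = X - Y := by
    rw [← e1, Finset.sum_comm]
    exact Finset.sum_congr rfl fun b _ => Finset.sum_comm
  have r2 : ∑ b, ∑ c, ∑ d, R a d b c • (β b * β c * β d) = X - Y - Y := by
    rw [← e2]
    symm
    rw [Finset.sum_comm]
    exact Finset.sum_congr rfl fun b _ => Finset.sum_comm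
  have hz : X + (X - Y) + (X - Y - Y) = 0 := by
    rw [← r2, ← r1, hX]
    simp only [← Finset.sum_add_distrib, ← add_smul, hBianchi, zero_smul, Finset.sum_const_zero]
  have h3 : (3:ℝ) • (X - Y) = 0 := by
    rw [← hz]; module
  exact sub_eq_zero.mp ((smul_eq_zero.mp h3).resolve_left (by norm_num))
end

section
/- Let n ≥ 1 and let Cl be the Clifford algebra of the quadratic form Q(x) = −‖x‖²/2 on Euclidean space ℝⁿ; set β_a = ι(e_a), so that β_a β_b + β_b β_a = −δ_{ab}·1 in Cl. Let R be a Riemann-type tensor on {1,…,n}. Then Σ_{a,b,c,d} R_{abcd} · β_a β_b β_c β_d = −(Sc/2)·1 in Cl, where Sc = Σ_{a,c} R_{caca}. (Second identity of equation (4.13) in the proof of Proposition 4.7.) -/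
open CliffordAlgebra

theorem aux_anti {n : ℕ} (Q : QuadraticForm ℝ (EuclideanSpace ℝ (Fin n)))
    (hQ : ∀ x : EuclideanSpace ℝ (Fin n), Q x = -(‖x‖ ^ 2 / 2)) (a b : Fin n) :
    CliffordAlgebra.ι Q (EuclideanSpace.single a (1 : ℝ)) *
      CliffordAlgebra.ι Q (EuclideanSpace.single b (1 : ℝ)) =
    -(if a = b then (1 : ℝ) else 0) • (1 : CliffordAlgebra Q) -
    CliffordAlgebra.ι Q (EuclideanSpace.single b (1 : ℝ)) *
      CliffordAlgebra.ι Q (EuclideanSpace.single a (1 : ℝ)) := by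
  rw [eq_sub_iff_add_eq, CliffordAlgebra.ι_mul_ι_add_swap, Algebra.algebraMap_eq_smul_one]
  congr 1
  rw [QuadraticMap.polar, hQ, hQ, hQ, @norm_add_sq_real]
  simp [EuclideanSpace.inner_single_left]
  split_ifs <;> ring

theorem aux_T {n : ℕ} {A : Type*} [Ring A] [Algebra ℝ A] (β : Fin n → A)
    (h : ∀ a b, β a * β b = -(if a = b then (1 : ℝ) else 0) • (1 : A) - β b * β a)
    (r : Fin n → Fin n → Fin n → ℝ)
    (h2 : ∀ b c d, r b c d = - r b d c)
    (hB : ∀ b c d, r b c d + r c d b + r d b c = 0) :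
    ∑ b, ∑ c, ∑ d, r b c d • (β b * β c * β d) = ∑ b, ∑ c, r b c b • β c := by
  have e1 : ∀ b c d, β d * β b * β c = β b * β c * β d
      - (if d = b then (1 : ℝ) else 0) • β c + (if d = c then (1 : ℝ) else 0) • β b := by
    intro b c d
    rw [h d b, sub_mul, mul_assoc (β b) (β d), h d c, mul_sub, mul_assoc (β b) (β c)]
    simp only [neg_smul, neg_mul, mul_neg, smul_mul_assoc, mul_smul_comm, one_mul, mul_one]
    abel
  have e2 : ∀ b c d, β c * β d * β b = β b * β c * β d
      - (if d = b then (1 : ℝ) else 0) • β c + (if c = b then (1 : ℝ) else 0) • β d := by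
    intro b c d
    rw [mul_assoc, h d b, mul_sub, ← mul_assoc (β c), h c b, sub_mul]
    simp only [neg_smul, neg_mul, mul_neg, smul_mul_assoc, mul_smul_comm, one_mul, mul_one]
    abel
  have s0 : ∑ b, ∑ c, ∑ d, (r b c d + r c d b + r d b c) • (β b * β c * β d) = 0 := by
    simp [hB]
  simp only [add_smul, Finset.sum_add_distrib] at s0
  have s1 : ∑ b, ∑ c, ∑ d, r c d b • (β b * β c * β d)
      = ∑ b, ∑ c, ∑ d, r b c d • (β d * β b * β c) := by
    rw [Finset.sum_comm]
    refine Finset.sum_congr rfl fun b _ => ?_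
    rw [Finset.sum_comm]
  have s2 : ∑ b, ∑ c, ∑ d, r d b c • (β b * β c * β d)
      = ∑ b, ∑ c, ∑ d, r b c d • (β c * β d * β b) := by
    symm
    rw [Finset.sum_comm]
    refine Finset.sum_congr rfl fun b _ => ?_
    rw [Finset.sum_comm]
  have hz : ∀ b c, r b c c = 0 := fun b c => by linarith [h2 b c c]
  have t1 : ∑ b, ∑ c, ∑ d, r b c d • (β d * β b * β c) = ∑ b, ∑ c, ∑ d, r b c d • (β b * β c * β d
      - (if d = b then (1 : ℝ) else 0) • β c + (if d = c then (1 : ℝ) else 0) • β b) :=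
    Finset.sum_congr rfl fun b _ => Finset.sum_congr rfl fun c _ =>
      Finset.sum_congr rfl fun d _ => by rw [← e1]
  have t2 : ∑ b, ∑ c, ∑ d, r b c d • (β c * β d * β b) = ∑ b, ∑ c, ∑ d, r b c d • (β b * β c * β d
      - (if d = b then (1 : ℝ) else 0) • β c + (if c = b then (1 : ℝ) else 0) • β d) :=
    Finset.sum_congr rfl fun b _ => Finset.sum_congr rfl fun c _ =>
      Finset.sum_congr rfl fun d _ => by rw [← e2]
  rw [s1, s2, t1, t2] at s0
  simp only [smul_add, smul_sub, Finset.sum_add_distrib, Finset.sum_sub_distrib,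
    ite_smul, one_smul, zero_smul, smul_ite, smul_zero, Finset.sum_ite_eq', Finset.mem_univ,
    if_true, hz, Finset.sum_const_zero] at s0
  have s3 : ∑ b, ∑ c, ∑ d, (if c = b then r b c d • β d else 0)
      = - ∑ b, ∑ c, r b c b • β c := by
    rw [← Finset.sum_neg_distrib]
    refine Finset.sum_congr rfl fun b _ => ?_
    rw [Finset.sum_comm, ← Finset.sum_neg_distrib]
    refine Finset.sum_congr rfl fun c _ => ?_
    rw [Finset.sum_ite_eq', if_pos (Finset.mem_univ _), h2 b b c, neg_smul]
  rw [s3] at s0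
  set T := ∑ b, ∑ c, ∑ d, r b c d • (β b * β c * β d)
  set U := ∑ b, ∑ c, r b c b • β c
  have : (3 : ℝ) • (T - U) = 0 := by
    rw [← s0]; module
  exact sub_eq_zero.1 ((smul_eq_zero.1 this).resolve_left (by norm_num))

/-- Second identity of equation (4.13) in the proof of Proposition 4.7: in the
Clifford algebra of the quadratic form `Q(x) = −‖x‖²/2` on Euclidean `ℝⁿ`, with
`β_a = ι(e_a)`, a Riemann-type tensor `R` satisfies
`Σ_{a,b,c,d} R_{abcd} β_a β_b β_c β_d = −(Sc/2)·1` where `Sc = Σ_{a,c} R_{caca}`. -/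
theorem riemann_clifford_full_contraction_scalar (n : ℕ) (hn : 1 ≤ n)
    (Q : QuadraticForm ℝ (EuclideanSpace ℝ (Fin n)))
    (hQ : ∀ x : EuclideanSpace ℝ (Fin n), Q x = -(‖x‖ ^ 2 / 2))
    (β : Fin n → CliffordAlgebra Q)
    (hβ : ∀ a, β a = CliffordAlgebra.ι Q (EuclideanSpace.single a (1 : ℝ)))
    (R : Fin n → Fin n → Fin n → Fin n → ℝ)
    (hR1 : ∀ a b c d, R a b c d = -R b a c d)
    (hR2 : ∀ a b c d, R a b c d = -R a b d c)
    (hR3 : ∀ a b c d, R a b c d = R c d a b)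
    (hBianchi : ∀ a b c d, R a b c d + R a c d b + R a d b c = 0) :
    ∑ a, ∑ b, ∑ c, ∑ d, R a b c d • (β a * β b * β c * β d)
      = (-(∑ a, ∑ c, R c a c a) / 2) • (1 : CliffordAlgebra Q) := by
  have h : ∀ a b, β a * β b = -(if a = b then (1 : ℝ) else 0) • (1 : CliffordAlgebra Q)
      - β b * β a := by
    intro a b
    rw [hβ, hβ]
    exact aux_anti Q hQ a b
  have hS : ∑ a, ∑ b, ∑ c, ∑ d, R a b c d • (β a * β b * β c * β d)
      = ∑ a, ∑ b, ∑ c, R a b c b • (β a * β c) := by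
    refine Finset.sum_congr rfl fun a _ => ?_
    have := congrArg (fun x => β a * x)
      (aux_T β h (R a) (hR2 a) (fun b c d => hBianchi a b c d))
    simpa only [Finset.mul_sum, mul_smul_comm, ← mul_assoc] using this
  have hsw : ∑ a, ∑ b, ∑ c, R a b c b • (β a * β c)
      = ∑ a, ∑ b, ∑ c, R a b c b • (β c * β a) := by
    have w : ∀ f : Fin n → Fin n → Fin n → CliffordAlgebra Q,
        ∑ a, ∑ b, ∑ c, f a b c = ∑ a, ∑ b, ∑ c, f c b a := by
      intro f
      rw [Finset.sum_comm]
      conv_rhs => rw [Finset.sum_comm]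
      refine Finset.sum_congr rfl fun b _ => ?_
      rw [Finset.sum_comm]
    rw [w]
    refine Finset.sum_congr rfl fun a _ => Finset.sum_congr rfl fun b _ =>
      Finset.sum_congr rfl fun c _ => ?_
    rw [hR3 c b a b]
  have hd : ∑ a, ∑ b, ∑ c, R a b c b • (β a * β c)
      = -((∑ a, ∑ c, R c a c a) • (1 : CliffordAlgebra Q))
        - ∑ a, ∑ b, ∑ c, R a b c b • (β c * β a) := by
    conv_lhs => 
      enter [2, a, 2, b, 2, c]
      rw [h a c]
    simp only [smul_sub, Finset.sum_sub_distrib, neg_smul, smul_neg, Finset.sum_neg_distrib,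
      ite_smul, one_smul, zero_smul, smul_ite, smul_zero, Finset.sum_ite_eq, Finset.mem_univ,
      if_true]
    rw [Finset.sum_comm]
    simp only [Finset.sum_smul]
  rw [hS]
  rw [← hsw] at hd
  set S := ∑ a, ∑ b, ∑ c, R a b c b • (β a * β c)
  set K := ∑ a, ∑ c, R c a c a
  have : (2 : ℝ) • (S - (-K / 2) • (1 : CliffordAlgebra Q)) = 0 := by
    have h3 : S + S = -(K • (1 : CliffordAlgebra Q)) := by
      nth_rewrite 1 [hd]; abel
    rw [smul_sub, two_smul, h3]; module
  exact sub_eq_zero.1 ((smul_eq_zero.1 this).resolve_left (by norm_num))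
end
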